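/- Let f : X → (-∞,+∞] be a c-antiderivative of a multivalued mapping M : X ⇉ Y, and let S be a nonempty subset of dom(M). If h : X → (-∞,+∞] is any function (not necessarily c-convex) such that G(M) ⊆ G(∂_c h) and h|_S = f|_S, then α_{[c,f|_S,M]} ≤ h pointwise on X and h^c ∈ 𝒜_{[c,f^c|_{M(S)},M⁻¹]}, i.e., h^c is a c-convex c-antiderivative of M⁻¹ which coincides with f^c on M(S). -/

import Mathlib

noncomputable section

open scoped Classical

variable {X Y : Type*}

/-- The `c`-transform of `f : X → EReal`, a function on `Y`:
`f^c(y) = sup_{x ∈ X} (c(x,y) - f(x))`. The `c`-transform of a function on `Y` is obtained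
by applying this to the swapped coupling `fun y x => c x y`. -/
def cTransform (c : X → Y → ℝ) (f : X → EReal) : Y → EReal :=
  fun y => ⨆ x, ((c x y : EReal) - f x)

/-- `f` is proper: it takes no value `-∞` (i.e. maps into `(-∞, +∞]`) and is finite somewhere. -/
def ProperFn (f : X → EReal) : Prop :=
  (∀ x, f x ≠ ⊥) ∧ ∃ x, f x ≠ ⊤

/-- `f` is `c`-convex: it is proper and is the `c`-transform of some proper
`g : Y → (-∞, +∞]`. -/
def IsCConvex (c : X → Y → ℝ) (f : X → EReal) : Prop :=
  ProperFn f ∧ ∃ g : Y → EReal, ProperFn g ∧ f = cTransform (fun y x => c x y) g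

/-- The `c`-subdifferential of `f`:
`∂_c f(x) = { y | ∀ x', f(x) + c(x',y) ≤ f(x') + c(x,y) }`. -/
def cSubdiff (c : X → Y → ℝ) (f : X → EReal) (x : X) : Set Y :=
  { y | ∀ x', f x + (c x' y : EReal) ≤ f x' + (c x y : EReal) }

/-- The domain of a multivalued mapping `M : X ⇉ Y`. -/
def mapDom (M : X → Set Y) : Set X := { x | (M x).Nonempty }

/-- The inverse multivalued mapping `M⁻¹ : Y ⇉ X`. -/
def mapInv (M : X → Set Y) : Y → Set X := fun y => { x | y ∈ M x }

/-- The image `M(S) = ⋃_{s ∈ S} M(s)` of a set `S` under a multivalued mapping. -/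
def mapImageOn (M : X → Set Y) (S : Set X) : Set Y := { y | ∃ s ∈ S, y ∈ M s }

/-- The image `Im(M) = ⋃_{x ∈ X} M(x)` of a multivalued mapping. -/
def mapIm (M : X → Set Y) : Set Y := { y | ∃ x, y ∈ M x }

/-- `f` is a `c`-antiderivative of `M`: `f` is proper and `G(M) ⊆ G(∂_c f)`. -/
def IsCAntiderivative (c : X → Y → ℝ) (f : X → EReal) (M : X → Set Y) : Prop :=
  ProperFn f ∧ ∀ x y, y ∈ M x → y ∈ cSubdiff c f x

/-- The family `𝒜_{[c, f|_S, M]}` of all `c`-convex `c`-antiderivatives of `M`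
which coincide with `f` on `S`. -/
def cFamily (c : X → Y → ℝ) (f : X → EReal) (S : Set X) (M : X → Set Y) :
    Set (X → EReal) :=
  { h | IsCConvex c h ∧ (∀ x y, y ∈ M x → y ∈ cSubdiff c h x) ∧ ∀ s ∈ S, h s = f s }

/-- The upper envelope `γ_{[c, f|_S, M]}`. -/
def upperEnv (c : X → Y → ℝ) (f : X → EReal) (S : Set X) (M : X → Set Y) : X → EReal :=
  fun x => ⨆ h ∈ cFamily c f S M, h x

/-- The lower envelope `α_{[c, f|_S, M]}`. -/
def lowerEnv (c : X → Y → ℝ) (f : X → EReal) (S : Set X) (M : X → Set Y) : X → EReal :=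
  fun x => ⨅ h ∈ cFamily c f S M, h x

/-- The indicator function `ι_A` (0 on `A`, `+∞` off `A`). -/
def indicatorE (A : Set X) : X → EReal := fun x => if x ∈ A then 0 else ⊤

/-- Rockafellar's function `R_{[c,M,s]}`: the supremum over `n ≥ 1` and chains
`x_1 = s`, `x_{n+1} = x`, `{(x_i, y_i)}_{i=1}^n ⊆ G(M)` of
`Σ_{i=1}^n [c(x_{i+1}, y_i) - c(x_i, y_i)]` (0-indexed below). -/
def rockafellar (c : X → Y → ℝ) (M : X → Set Y) (s : X) : X → EReal := fun x =>
  ⨆ (n : ℕ) (_ : 0 < n) (xs : ℕ → X) (ys : ℕ → Y)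
      (_ : xs 0 = s ∧ ∀ i < n, ys i ∈ M (xs i)),
    (((∑ i ∈ Finset.range n,
        (c (if i + 1 < n then xs (i + 1) else x) (ys i) - c (xs i) (ys i))) : ℝ) : EReal)

/-- `M` is cyclically monotone of order `n` with respect to `c`: for any `n` pairs
`{(x_i, y_i)}_{i=1}^n ⊆ G(M)`, setting `x_{n+1} = x_1`,
`0 ≤ Σ_{i=1}^n [c(x_i,y_i) - c(x_{i+1},y_i)]` (0-indexed below, cyclically). -/
def IsNCMonotone (c : X → Y → ℝ) (M : X → Set Y) (n : ℕ) : Prop :=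
  ∀ (xs : ℕ → X) (ys : ℕ → Y), (∀ i < n, ys i ∈ M (xs i)) →
    0 ≤ ∑ i ∈ Finset.range n, (c (xs i) (ys i) - c (xs ((i + 1) % n)) (ys i))

/-- `M` is `c`-cyclically monotone: `n`-`c`-monotone for all `n`. -/
def IsCCyclicallyMonotone (c : X → Y → ℝ) (M : X → Set Y) : Prop :=
  ∀ n : ℕ, IsNCMonotone c M n

/-- At a subgradient pair the function is finite and the Fenchel equality holds. -/
theorem aux_eq {X Y : Type*} (c : X → Y → ℝ) (h : X → EReal) (hp : ProperFn h) (x : X) (y : Y)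
    (hy : y ∈ cSubdiff c h x) :
    ∃ a : ℝ, h x = a ∧ cTransform c h y = ((c x y - a : ℝ) : EReal) := by
  obtain ⟨hb, x0, hx0⟩ := hp
  have hx : h x ≠ ⊤ := by
    intro ht
    have h1 := hy x0
    obtain ⟨b, hb0⟩ : ∃ b : ℝ, h x0 = b := ⟨_, (EReal.coe_toReal hx0 (hb x0)).symm⟩
    rw [ht, hb0, EReal.top_add_coe, ← EReal.coe_add] at h1
    exact absurd (top_le_iff.1 h1) (EReal.coe_ne_top _)
  obtain ⟨a, ha⟩ : ∃ b : ℝ, h x = b := ⟨_, (EReal.coe_toReal hx (hb x)).symm⟩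
  refine ⟨a, ha, le_antisymm (iSup_le fun x' => ?_) ?_⟩
  · have h1 := hy x'
    by_cases ht : h x' = ⊤
    · rw [ht, EReal.sub_top]
      exact bot_le
    · obtain ⟨b, hb0⟩ : ∃ b : ℝ, h x' = b := ⟨_, (EReal.coe_toReal ht (hb x')).symm⟩
      rw [ha, hb0] at h1
      rw [hb0]
      norm_cast at h1 ⊢
      linarith
  · refine le_trans (le_of_eq ?_) (le_iSup _ x)
    rw [ha, EReal.coe_sub]

theorem aux_proper {X Y : Type*} (c : X → Y → ℝ) (h : X → EReal) (hp : ProperFn h) (x : X) (y : Y)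
    (hy : y ∈ cSubdiff c h x) : ProperFn (cTransform c h) := by
  obtain ⟨a, ha, he⟩ := aux_eq c h hp x y hy
  refine ⟨fun y' hb => ?_, y, by rw [he]; exact EReal.coe_ne_top _⟩
  have h1 : (c x y' : EReal) - h x ≤ cTransform c h y' :=
    le_iSup (fun x => (c x y' : EReal) - h x) x
  rw [hb, ha, ← EReal.coe_sub] at h1
  exact absurd (le_bot_iff.1 h1) (EReal.coe_ne_bot _)

theorem aux_sub {X Y : Type*} (c : X → Y → ℝ) (h : X → EReal) (hp : ProperFn h) (x : X) (y : Y)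
    (hy : y ∈ cSubdiff c h x) : x ∈ cSubdiff (fun y x => c x y) (cTransform c h) y := by
  obtain ⟨a, ha, he⟩ := aux_eq c h hp x y hy
  intro y'
  have h1 : (c x y' : EReal) - h x ≤ cTransform c h y' :=
    le_iSup (fun x => (c x y' : EReal) - h x) x
  rw [ha, ← EReal.coe_sub] at h1
  rw [he]
  refine le_trans (le_of_eq ?_) (add_le_add_left h1 _)
  norm_cast
  ring

theorem aux_bi {X Y : Type*} (c : X → Y → ℝ) (h : X → EReal) (hb : ∀ x, h x ≠ ⊥) (x : X) :
    cTransform (fun y x => c x y) (cTransform c h) x ≤ h x := by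
  refine iSup_le fun y => ?_
  by_cases ht : h x = ⊤
  · rw [ht]
    exact le_top
  obtain ⟨a, ha⟩ : ∃ b : ℝ, h x = b := ⟨_, (EReal.coe_toReal ht (hb x)).symm⟩
  have h1 : (c x y : EReal) - h x ≤ cTransform c h y :=
    le_iSup (fun x => (c x y : EReal) - h x) x
  rw [ha] at h1 ⊢
  generalize cTransform c h y = t at h1
  induction t with
  | bot =>
    rw [← EReal.coe_sub] at h1
    exact absurd (le_bot_iff.1 h1) (EReal.coe_ne_bot _)
  | top => rw [EReal.sub_top]; exact bot_le
  | coe t =>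
    norm_cast at h1 ⊢
    linarith

/-- If `h : X → (-∞,+∞]` is any function with `G(M) ⊆ G(∂_c h)` and
`h|_S = f|_S`, then `α_{[c,f|_S,M]} ≤ h` and `h^c ∈ 𝒜_{[c, f^c|_{M(S)}, M⁻¹]}`. -/
theorem statement3 [Nonempty X] [Nonempty Y] (c : X → Y → ℝ) (f : X → EReal)
    (M : X → Set Y) (hf : IsCAntiderivative c f M)
    (S : Set X) (hS : S.Nonempty) (hSdom : S ⊆ mapDom M)
    (h : X → EReal) (hbot : ∀ x, h x ≠ ⊥)
    (hanti : ∀ x y, y ∈ M x → y ∈ cSubdiff c h x)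
    (hhS : ∀ s ∈ S, h s = f s) :
    (∀ x, lowerEnv c f S M x ≤ h x) ∧
      cTransform c h ∈
        cFamily (fun y x => c x y) (cTransform c f) (mapImageOn M S) (mapInv M) := by
  obtain ⟨s, hs⟩ := hS
  obtain ⟨y, hy⟩ := hSdom hs
  obtain ⟨hfp, hfa⟩ := hf
  have hp : ProperFn h := by
    obtain ⟨a, ha, -⟩ := aux_eq c f hfp s y (hfa s y hy)
    exact ⟨hbot, s, by rw [hhS s hs, ha]; exact EReal.coe_ne_top _⟩
  have hp1 := aux_proper c h hp s y (hanti s y hy)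
  have hs1 : ∀ x y, y ∈ M x → x ∈ cSubdiff (fun y x => c x y) (cTransform c h) y :=
    fun x y hxy => aux_sub c h hp x y (hanti x y hxy)
  have hp2 := aux_proper _ _ hp1 y s (hs1 s y hy)
  refine ⟨fun x => ?_, ⟨hp1, h, hp, rfl⟩, fun y x hxy => hs1 x y hxy, ?_⟩
  · refine le_trans (iInf₂_le (cTransform (fun y x => c x y) (cTransform c h)) ?_)
      (aux_bi c h hbot x)
    refine ⟨⟨hp2, _, hp1, rfl⟩, fun x y hxy => aux_sub _ _ hp1 y x (hs1 x y hxy), ?_⟩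
    intro s hs
    obtain ⟨y, hy⟩ := hSdom hs
    obtain ⟨a, ha, he⟩ := aux_eq c h hp s y (hanti s y hy)
    obtain ⟨b, hb, he'⟩ := aux_eq _ _ hp1 y s (hs1 s y hy)
    rw [he', ← hhS s hs, ha]
    rw [he] at hb
    norm_cast at hb ⊢
    linarith
  · rintro y ⟨s, hs, hy⟩
    obtain ⟨a, ha, he⟩ := aux_eq c h hp s y (hanti s y hy)
    obtain ⟨b, hb, he'⟩ := aux_eq c f hfp s y (hfa s y hy)
    rw [he, he']
    rw [hhS s hs, hb] at ha
    norm_cast at ha ⊢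
    rw [ha]
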